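/- For an annulus A = B_R(0) \ \overline{B_ρ(0)} ⊆ ℝ² with 0 < ρ < R, the full annulus A is a Cheeger set of itself; in particular, for every measurable E ⊆ A with |E| > 0, Per(E)/|E| ≥ Per(A)/|A| = (2πR + 2πρ)/(π(R² − ρ²)) = 2/(R − ρ). -/

import Mathlib

open MeasureTheory Real Set Filter

noncomputable section

abbrev E2 := EuclideanSpace ℝ (Fin 2)

/-- Divergence of a vector field on the plane. -/
def div2 (z : E2 → E2) (x : E2) : ℝ := ∑ i : Fin 2, fderiv ℝ z x (EuclideanSpace.single i 1) i

/-- The dual set defining the total variation. -/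
def tvSet (u : E2 → ℝ) : Set ℝ :=
  {y | ∃ z : E2 → E2, ContDiff ℝ (⊤ : ℕ∞) z ∧ HasCompactSupport z ∧ (∀ x, ‖z x‖ ≤ 1) ∧
        y = ∫ x, u x * div2 z x}

/-- Total variation of a function on ℝ². -/
def TV (u : E2 → ℝ) : ℝ := sSup (tvSet u)

/-- `u` has bounded variation. -/
def HasBV (u : E2 → ℝ) : Prop := BddAbove (tvSet u)

/-- Perimeter of a set. -/
def Per (A : Set E2) : ℝ := TV (A.indicator 1)

/-- `A` has finite perimeter. -/
def FinPer (A : Set E2) : Prop := HasBV (A.indicator 1)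

/-- Lebesgue measure as a real number. -/
def volR (A : Set E2) : ℝ := (volume A).toReal

/-- Cheeger constant of a domain `D`. -/
def cheegerConst (D : Set E2) : ℝ :=
  sInf {q : ℝ | ∃ A : Set E2, MeasurableSet A ∧ FinPer A ∧ A ⊆ D ∧ 0 < volR A ∧ q = Per A / volR A}

/-- `A` is a Cheeger set of `D`. -/
def IsCheegerSet (D A : Set E2) : Prop :=
  MeasurableSet A ∧ FinPer A ∧ A ⊆ D ∧ 0 < volR A ∧ Per A / volR A = cheegerConst D

/-!
The radial field `w(x) = (R - ρ)⁻¹ (1 - Rρ / |x|²) x` has constant divergence `2 / (R - ρ)` and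
satisfies `|w| ≤ 1` on the closed annulus, so testing the perimeter of a set `A` inside the annulus
against smooth cutoffs of `t w`, `t < 1`, and letting `t → 1` gives `2 / (R - ρ) |A| ≤ Per A`.

Conversely, the perimeter is at most the outer Minkowski content: integrate the divergence of a test
field against the Lipschitz function that falls linearly from `1` on `A` to `0` at distance `δ`,
integrate by parts, and let `δ → 0`. The `δ`-neighbourhood of the annulus adds area at most
`2π(R + ρ)δ`, hence `Per ≤ 2π(R + ρ)`, which is the lower bound for the annulus itself.
-/

section Cutoff

open scoped Topology

variable {E F : Type*} [NormedAddCommGroup E] [NormedSpace ℝ E] [FiniteDimensional ℝ E]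
  [NormedAddCommGroup F] [NormedSpace ℝ F]

theorem exists_contDiff_hasCompactSupport_one_nhdsSet {K U : Set E} (hK : IsCompact K)
    (hU : IsOpen U) (hKU : K ⊆ U) :
    ∃ χ : E → ℝ, ContDiff ℝ (⊤ : ℕ∞) χ ∧ HasCompactSupport χ ∧ tsupport χ ⊆ U ∧
      (∀ x, χ x ∈ Icc 0 1) ∧ ∀ᶠ x in 𝓝ˢ K, χ x = 1 := by
  obtain ⟨L, hL, hKL, hLU⟩ := exists_compact_between hK hU hKU
  obtain ⟨χ, hχ_one, hχ_zero, hχ_mem⟩ := exists_contMDiffMap_one_nhds_of_subset_interior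
    (n := (⊤ : ℕ∞)) (modelWithCornersSelf ℝ E) hK.isClosed hKL
  have hsupp : tsupport χ ⊆ L :=
    closure_minimal (Function.support_subset_iff'.2 hχ_zero) hL.isClosed
  exact ⟨χ, χ.contMDiff.contDiff, hL.of_isClosed_subset (isClosed_tsupport χ) hsupp,
    hsupp.trans hLU, hχ_mem, hχ_one⟩

theorem exists_contDiff_hasCompactSupport_eventuallyEq_nhdsSet {K U : Set E} {f : E → F} {M : ℝ}
    (hK : IsCompact K) (hU : IsOpen U) (hKU : K ⊆ U) (hf : ContDiffOn ℝ (⊤ : ℕ∞) f U)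
    (hM : 0 ≤ M) (hfM : ∀ x ∈ K, ‖f x‖ < M) :
    ∃ g : E → F, ContDiff ℝ (⊤ : ℕ∞) g ∧ HasCompactSupport g ∧ (∀ x, ‖g x‖ ≤ M) ∧
      g =ᶠ[𝓝ˢ K] f := by
  have hV : IsOpen (U ∩ {x | ‖f x‖ < M}) :=
    hf.continuousOn.norm.isOpen_inter_preimage hU isOpen_Iio
  obtain ⟨χ, hχ, hχ_compact, hχ_supp, hχ_mem, hχ_one⟩ :=
    exists_contDiff_hasCompactSupport_one_nhdsSet hK hV fun x hx => ⟨hKU hx, hfM x hx⟩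
  refine ⟨fun x => χ x • f x, ?_, hχ_compact.smul_right, fun x => ?_, ?_⟩
  · refine contDiff_iff_contDiffAt.2 fun x => ?_
    by_cases hx : x ∈ tsupport χ
    · exact hχ.contDiffAt.smul (hf.contDiffAt (hU.mem_nhds (hχ_supp hx).1))
    · refine (contDiffAt_const (c := (0 : F))).congr_of_eventuallyEq ?_
      filter_upwards [notMem_tsupport_iff_eventuallyEq.1 hx] with y hy
      simp [hy]
  · by_cases hx : x ∈ tsupport χ
    · rw [norm_smul, Real.norm_of_nonneg (hχ_mem x).1]
      exact (mul_le_of_le_one_left (norm_nonneg _) (hχ_mem x).2).trans (hχ_supp hx).2.le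
    · simpa [image_eq_zero_of_notMem_tsupport hx] using hM
  · filter_upwards [hχ_one] with x hx
    simp [hx]

end Cutoff

section ThickenedIndicator

open Metric

variable {E : Type*} {δ : ℝ} {x : E}

section PseudoMetric

variable [PseudoMetricSpace E]

theorem lipschitzWith_coe_thickenedIndicator (hδ : 0 < δ) (A : Set E) :
    LipschitzWith δ.toNNReal⁻¹ (fun y => (thickenedIndicator hδ A y : ℝ)) := by
  simpa only [one_mul] using!
    NNReal.isometry_coe.lipschitz.comp (lipschitzWith_thickenedIndicator hδ A)

theorem abs_coe_thickenedIndicator_sub_indicator_le (hδ : 0 < δ) (A : Set E) (x : E) :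
    |(thickenedIndicator hδ A x : ℝ) - A.indicator 1 x| ≤ 1 := by
  have h_le : (thickenedIndicator hδ A x : ℝ) ≤ 1 := thickenedIndicator_le_one hδ A x
  by_cases hxA : x ∈ A
  · simp [hxA, thickenedIndicator_one hδ A hxA]
  · simpa [hxA] using h_le

theorem coe_thickenedIndicator_eq_indicator (hδ : 0 < δ) {A : Set E}
    (hx : x ∉ thickening δ A \ A) :
    (thickenedIndicator hδ A x : ℝ) = A.indicator 1 x := by
  by_cases hxA : x ∈ A
  · simp [hxA, thickenedIndicator_one hδ A hxA]
  · simp [hxA, thickenedIndicator_zero hδ A fun h => hx ⟨h, hxA⟩]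

end PseudoMetric

variable [NormedAddCommGroup E] [NormedSpace ℝ E]

theorem norm_fderiv_coe_thickenedIndicator_le (hδ : 0 < δ) (A : Set E) (x : E) :
    ‖fderiv ℝ (fun y => (thickenedIndicator hδ A y : ℝ)) x‖ ≤ δ⁻¹ := by
  simpa [hδ.le] using
    norm_fderiv_le_of_lipschitz ℝ (lipschitzWith_coe_thickenedIndicator hδ A) (x₀ := x)

theorem fderiv_coe_thickenedIndicator_eq_zero (hδ : 0 < δ) {A : Set E}
    (hx : x ∉ thickening δ A \ A) :
    fderiv ℝ (fun y => (thickenedIndicator hδ A y : ℝ)) x = 0 := by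
  by_cases hxA : x ∈ A
  · refine IsLocalMax.fderiv_eq_zero (.of_forall fun y => ?_)
    simpa [thickenedIndicator_one hδ A hxA] using thickenedIndicator_le_one hδ A y
  · have hxT : x ∉ thickening δ A := fun h => hx ⟨h, hxA⟩
    refine IsLocalMin.fderiv_eq_zero (.of_forall fun y => ?_)
    simp [thickenedIndicator_zero hδ A hxT]

end ThickenedIndicator

theorem norm_integral_le_of_forall_notMem_eq_zero {α G : Type*} [MeasurableSpace α]
    [NormedAddCommGroup G] [NormedSpace ℝ G] {μ : Measure α} {s : Set α} {f : α → G} {C : ℝ}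
    (hs : μ s < ⊤) (hC : ∀ x ∈ s, ‖f x‖ ≤ C) (hf : ∀ x ∉ s, f x = 0) :
    ‖∫ x, f x ∂μ‖ ≤ C * μ.real s := by
  rw [← setIntegral_eq_integral_of_forall_compl_eq_zero hf]
  exact norm_setIntegral_le_of_norm_le_const hs hC

section LineDeriv

variable {E : Type*} [NormedAddCommGroup E] [NormedSpace ℝ E] [MeasurableSpace E] [BorelSpace E]
  {φ g : E → ℝ}

theorem integrable_mul_lineDeriv {μ : Measure E} [IsFiniteMeasureOnCompacts μ] (hφ : Continuous φ)
    (hg : ContDiff ℝ 1 g) (hg_supp : HasCompactSupport g) (v : E) :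
    Integrable (fun x => φ x * lineDeriv ℝ g x v) μ := by
  simp_rw [(hg.differentiable one_ne_zero _).lineDeriv_eq_fderiv]
  exact (hφ.mul ((hg.continuous_fderiv one_ne_zero).clm_apply
    continuous_const)).integrable_of_hasCompactSupport (hg_supp.fderiv_apply ℝ v).mul_left

theorem integral_mul_lineDeriv_eq_neg [FiniteDimensional ℝ E] {μ : Measure E} [μ.IsAddHaarMeasure]
    {C : NNReal} (hφ : LipschitzWith C φ) (hg : ContDiff ℝ 1 g) (hg_supp : HasCompactSupport g)
    (v : E) : ∫ x, φ x * lineDeriv ℝ g x v ∂μ = -∫ x, lineDeriv ℝ φ x v * g x ∂μ := by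
  obtain ⟨D, hD⟩ := hg.lipschitzWith_of_hasCompactSupport hg_supp one_ne_zero
  rw [hφ.integral_lineDeriv_mul_eq hD hg_supp]
  simp [lineDeriv_neg, integral_neg, mul_comm]

end LineDeriv

section Divergence

open scoped Topology

theorem continuous_div2 {z : E2 → E2} (hz : ContDiff ℝ 1 z) : Continuous (div2 z) := by
  have := hz.continuous_fderiv one_ne_zero
  unfold div2
  fun_prop

theorem hasCompactSupport_div2 {z : E2 → E2} (hz : HasCompactSupport z) :
    HasCompactSupport (div2 z) :=
  (hz.fderiv ℝ).mono fun x hx h => hx (by simp [div2, h])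

theorem div2_congr {z w : E2 → E2} {x : E2} (h : z =ᶠ[𝓝 x] w) : div2 z x = div2 w x := by
  rw [div2, div2, h.fderiv_eq]

theorem div2_const_smul (c : ℝ) (z : E2 → E2) (x : E2) :
    div2 (c • z) x = c * div2 z x := by
  simp [div2, fderiv_const_smul_field, mul_add]

theorem div2_eq_sum_lineDeriv {z : E2 → E2} {x : E2} (hz : DifferentiableAt ℝ z x) :
    div2 z x = ∑ i, lineDeriv ℝ (fun y => z y i) x (EuclideanSpace.single i 1) := by
  refine Finset.sum_congr rfl fun i _ => ?_
  have hzi := (EuclideanSpace.proj i : E2 →L[ℝ] ℝ).hasFDerivAt.comp x hz.hasFDerivAt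
  exact (hzi.hasLineDerivAt (EuclideanSpace.single i 1)).lineDeriv.symm

theorem clm_apply_eq_sum_single {ι : Type*} [Fintype ι] [DecidableEq ι]
    (L : EuclideanSpace ℝ ι →L[ℝ] ℝ) (v : EuclideanSpace ℝ ι) :
    L v = ∑ i, L (EuclideanSpace.single i 1) * v i := by
  conv_lhs => rw [← (EuclideanSpace.basisFun ι ℝ).sum_repr v]
  simp [mul_comm]

theorem div2_smul_self {f : E2 → ℝ} {x : E2} (hf : DifferentiableAt ℝ f x) :
    div2 (fun y => f y • y) x = 2 * f x + fderiv ℝ f x x := by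
  rw [div2, fderiv_fun_smul hf differentiableAt_fun_id, clm_apply_eq_sum_single (fderiv ℝ f x) x]
  simp [Finset.sum_add_distrib]

theorem integral_mul_div2_eq_neg_integral_fderiv {φ : E2 → ℝ} {C : NNReal}
    (hφ : LipschitzWith C φ) {z : E2 → E2} (hz : ContDiff ℝ 1 z) (hz_supp : HasCompactSupport z) :
    ∫ x, φ x * div2 z x = -∫ x, fderiv ℝ φ x (z x) := by
  let e (i : Fin 2) : E2 := EuclideanSpace.single i 1
  have hzi (i : Fin 2) : ContDiff ℝ 1 fun x => z x i := contDiff_euclidean.1 hz i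
  have hzi_supp (i : Fin 2) : HasCompactSupport fun x => z x i :=
    hz_supp.comp_left (g := fun v : E2 => v i) rfl
  have h_int (i : Fin 2) : Integrable fun x => lineDeriv ℝ φ x (e i) * z x i :=
    (hφ.locallyIntegrable_lineDeriv (e i)).integrable_smul_right_of_hasCompactSupport
      (hzi i).continuous (hzi_supp i)
  calc ∫ x, φ x * div2 z x
      = ∫ x, ∑ i, φ x * lineDeriv ℝ (fun y => z y i) x (e i) := by
        simp_rw [div2_eq_sum_lineDeriv (hz.differentiable one_ne_zero _), Finset.mul_sum, e]
    _ = ∑ i, ∫ x, φ x * lineDeriv ℝ (fun y => z y i) x (e i) :=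
        integral_finsetSum _ fun i _ =>
          integrable_mul_lineDeriv hφ.continuous (hzi i) (hzi_supp i) (e i)
    _ = -∫ x, ∑ i, lineDeriv ℝ φ x (e i) * z x i := by
        rw [integral_finsetSum _ fun i _ => h_int i, ← Finset.sum_neg_distrib]
        exact Finset.sum_congr rfl fun i _ =>
          integral_mul_lineDeriv_eq_neg hφ (hzi i) (hzi_supp i) (e i)
    _ = -∫ x, fderiv ℝ φ x (z x) := by
        congr 1
        refine integral_congr_ae ?_
        filter_upwards [hφ.ae_differentiableAt] with x hx
        simp_rw [hx.lineDeriv_eq_fderiv]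
        exact (clm_apply_eq_sum_single (fderiv ℝ φ x) (z x)).symm

end Divergence

section Perimeter

open Metric
open scoped Topology

theorem setIntegral_div2_le_Per_of_contDiff {A : Set E2} (hA : MeasurableSet A) (hA_fin : FinPer A)
    {z : E2 → E2} (hz : ContDiff ℝ (⊤ : ℕ∞) z) (hz_supp : HasCompactSupport z)
    (hz_le : ∀ x, ‖z x‖ ≤ 1) : ∫ x in A, div2 z x ≤ Per A := by
  refine le_csSup hA_fin ⟨z, hz, hz_supp, hz_le, ?_⟩
  rw [← integral_indicator hA]
  exact integral_congr_ae (.of_forall fun x => by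
    by_cases hx : x ∈ A <;> simp [hx])

theorem setIntegral_div2_le_Per {A K U : Set E2} (hA : MeasurableSet A) (hA_fin : FinPer A)
    (hK : IsCompact K) (hAK : A ⊆ K) (hU : IsOpen U) (hKU : K ⊆ U) {w : E2 → E2}
    (hw : ContDiffOn ℝ (⊤ : ℕ∞) w U) (hw_le : ∀ x ∈ K, ‖w x‖ ≤ 1) :
    ∫ x in A, div2 w x ≤ Per A := by
  have h_scaled : ∀ t ∈ Ioo (0 : ℝ) 1, t * ∫ x in A, div2 w x ≤ Per A := by
    rintro t ⟨ht_pos, ht_lt⟩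
    have htw_lt : ∀ x ∈ K, ‖(t • w) x‖ < 1 := fun x hx => by
      rw [Pi.smul_apply, norm_smul, Real.norm_of_nonneg ht_pos.le]
      exact mul_lt_one_of_nonneg_of_lt_one_left ht_pos.le ht_lt (hw_le x hx)
    obtain ⟨z, hz, hz_supp, hz_le, hzw⟩ := exists_contDiff_hasCompactSupport_eventuallyEq_nhdsSet
      (f := t • w) hK hU hKU (hw.const_smul t) zero_le_one htw_lt
    have h_div : ∀ x ∈ A, div2 z x = t * div2 w x := fun x hx => by
      rw [div2_congr (hzw.filter_mono (nhds_le_nhdsSet (hAK hx))), ← div2_const_smul]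
    rw [← integral_const_mul, ← setIntegral_congr_fun hA h_div]
    exact setIntegral_div2_le_Per_of_contDiff hA hA_fin hz hz_supp hz_le
  have h_tendsto : Tendsto (fun t : ℝ => t * ∫ x in A, div2 w x) (𝓝[<] 1)
      (𝓝 (∫ x in A, div2 w x)) := by
    have h_cont : Continuous fun t : ℝ => t * ∫ x in A, div2 w x := by fun_prop
    simpa using (h_cont.tendsto 1).mono_left nhdsWithin_le_nhds
  exact le_of_tendsto h_tendsto (eventually_of_mem (Ioo_mem_nhdsLT zero_lt_one) h_scaled)

theorem integral_indicator_mul_div2_le {A : Set E2} (hA : MeasurableSet A) {δ : ℝ} (hδ : 0 < δ)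
    (hA_vol : volume (thickening δ A \ A) < ⊤) {z : E2 → E2} (hz : ContDiff ℝ 1 z)
    (hz_supp : HasCompactSupport z) (hz_le : ∀ x, ‖z x‖ ≤ 1) {M : ℝ} (hM : ∀ x, ‖div2 z x‖ ≤ M) :
    ∫ x, A.indicator 1 x * div2 z x ≤ (δ⁻¹ + M) * volR (thickening δ A \ A) := by
  let φ (x : E2) : ℝ := thickenedIndicator hδ A x
  have hφ : LipschitzWith δ.toNNReal⁻¹ φ := lipschitzWith_coe_thickenedIndicator hδ A
  have hz_int : Integrable (div2 z) :=
    (continuous_div2 hz).integrable_of_hasCompactSupport (hasCompactSupport_div2 hz_supp)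
  have h_flux : ‖∫ x, fderiv ℝ φ x (z x)‖ ≤ δ⁻¹ * volR (thickening δ A \ A) := by
    refine norm_integral_le_of_forall_notMem_eq_zero hA_vol (fun x _ => ?_) fun x hx => ?_
    · exact ((fderiv ℝ φ x).le_of_opNorm_le_of_le
        (norm_fderiv_coe_thickenedIndicator_le hδ A x) (hz_le x)).trans_eq (mul_one _)
    · rw [fderiv_coe_thickenedIndicator_eq_zero hδ hx, zero_apply]
  have h_error : ‖∫ x, (φ x - A.indicator 1 x) * div2 z x‖ ≤ M * volR (thickening δ A \ A) := by
    refine norm_integral_le_of_forall_notMem_eq_zero hA_vol (fun x _ => ?_) fun x hx => ?_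
    · rw [norm_mul]
      exact (mul_le_of_le_one_left (norm_nonneg _)
        (abs_coe_thickenedIndicator_sub_indicator_le hδ A x)).trans (hM x)
    · rw [sub_eq_zero.2 (coe_thickenedIndicator_eq_indicator hδ hx), zero_mul]
  have h_split : ∫ x, (φ x - A.indicator 1 x) * div2 z x =
      (∫ x, φ x * div2 z x) - ∫ x, A.indicator 1 x * div2 z x := by
    simp_rw [sub_mul]
    refine integral_sub ?_ ?_
    · exact (hφ.continuous.mul (continuous_div2 hz)).integrable_of_hasCompactSupport
        (hasCompactSupport_div2 hz_supp).mul_left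
    · refine (hz_int.indicator hA).congr (.of_forall fun x => ?_)
      by_cases hx : x ∈ A <;> simp [hx]
  rw [integral_mul_div2_eq_neg_integral_fderiv hφ hz hz_supp] at h_split
  linarith [(abs_le.1 h_flux).1, (abs_le.1 h_error).1]

-- The frequent bound says that the lower outer Minkowski content of `A` is at most `P`.
theorem le_of_mem_tvSet_indicator_of_frequently_volume_le {A : Set E2} (hA : MeasurableSet A)
    {P : ℝ} (hP : 0 ≤ P)
    (hAP : ∃ᶠ δ in 𝓝[>] 0, volume (thickening δ A \ A) ≤ ENNReal.ofReal (P * δ))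
    {y : ℝ} (hy : y ∈ tvSet (A.indicator 1)) : y ≤ P := by
  obtain ⟨z, hz, hz_supp, hz_le, rfl⟩ := hy
  have hz_one : ContDiff ℝ 1 z := hz.of_le (by exact_mod_cast le_top)
  obtain ⟨M, hM⟩ := (hasCompactSupport_div2 hz_supp).exists_bound_of_continuous
    (continuous_div2 hz_one)
  have hM_nonneg : 0 ≤ M := (norm_nonneg _).trans (hM 0)
  have h_tendsto : Tendsto (fun δ : ℝ => P + M * (P * δ)) (𝓝[>] 0) (𝓝 P) := by
    have : Continuous fun δ : ℝ => P + M * (P * δ) := by fun_prop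
    simpa using (this.tendsto 0).mono_left nhdsWithin_le_nhds
  refine ge_of_tendsto_of_frequently h_tendsto ?_
  refine (hAP.and_eventually self_mem_nhdsWithin).mono fun δ ⟨h_vol, hδ⟩ => ?_
  have hδ : 0 < δ := hδ
  have h_volR : volR (thickening δ A \ A) ≤ P * δ :=
    ENNReal.toReal_le_of_le_ofReal (by positivity) h_vol
  calc ∫ x, A.indicator 1 x * div2 z x
      ≤ (δ⁻¹ + M) * volR (thickening δ A \ A) :=
        integral_indicator_mul_div2_le hA hδ (h_vol.trans_lt ENNReal.ofReal_lt_top) hz_one hz_supp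
          hz_le hM
    _ ≤ (δ⁻¹ + M) * (P * δ) := by gcongr
    _ = P + M * (P * δ) := by field_simp

end Perimeter

section Annulus

open Metric
open scoped Topology

/-- The open planar annulus centred at the origin with inner radius `ρ` and outer radius `R`. -/
abbrev annulus (ρ R : ℝ) : Set E2 := ball 0 R \ closedBall 0 ρ

variable {ρ R : ℝ}

theorem isOpen_annulus (ρ R : ℝ) : IsOpen (annulus ρ R) :=
  isOpen_ball.sdiff isClosed_closedBall

theorem mem_annulus {x : E2} : x ∈ annulus ρ R ↔ ρ < ‖x‖ ∧ ‖x‖ < R := by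
  simp [and_comm]

theorem volume_annulus (hρ : 0 ≤ ρ) (hρR : ρ < R) :
    volume (annulus ρ R) = ENNReal.ofReal (π * (R ^ 2 - ρ ^ 2)) := by
  rw [measure_sdiff (closedBall_subset_ball hρR) measurableSet_closedBall.nullMeasurableSet
    measure_closedBall_lt_top.ne, EuclideanSpace.volume_ball_fin_two,
    EuclideanSpace.volume_closedBall_fin_two, ← ENNReal.ofReal_pow (hρ.trans hρR.le),
    ← ENNReal.ofReal_pow hρ, ← ENNReal.ofReal_mul (sq_nonneg R),
    ← ENNReal.ofReal_mul (sq_nonneg ρ), ← ENNReal.ofReal_sub _ (by positivity), ← sub_mul,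
    mul_comm]

theorem volR_annulus (hρ : 0 ≤ ρ) (hρR : ρ < R) : volR (annulus ρ R) = π * (R ^ 2 - ρ ^ 2) := by
  have h_nonneg : 0 ≤ π * (R ^ 2 - ρ ^ 2) := mul_nonneg pi_pos.le (sub_nonneg.2 (by gcongr))
  rw [volR, volume_annulus hρ hρR, ENNReal.toReal_ofReal h_nonneg]

theorem thickening_annulus_subset (ε ρ R : ℝ) :
    thickening ε (annulus ρ R) ⊆ annulus (ρ - ε) (R + ε) := by
  intro x hx
  obtain ⟨y, hy, hxy⟩ := mem_thickening_iff.1 hx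
  rw [mem_annulus] at hy ⊢
  rw [dist_eq_norm] at hxy
  have h_abs := abs_le.1 (abs_norm_sub_norm_le x y)
  constructor <;> linarith

theorem volume_thickening_annulus_sdiff_le {ε : ℝ} (hε : 0 < ε) (hερ : ε ≤ ρ) (hρR : ρ < R) :
    volume (thickening ε (annulus ρ R) \ annulus ρ R) ≤
      ENNReal.ofReal (2 * π * (R + ρ) * ε) := by
  have h_subset : annulus ρ R ⊆ annulus (ρ - ε) (R + ε) :=
    (self_subset_thickening hε _).trans (thickening_annulus_subset ε ρ R)
  have hρ : 0 < ρ := hε.trans_le hερ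
  have h_nonneg : 0 ≤ π * (R ^ 2 - ρ ^ 2) :=
    mul_nonneg pi_pos.le (sub_nonneg.2 (by gcongr))
  calc volume (thickening ε (annulus ρ R) \ annulus ρ R)
      ≤ volume (annulus (ρ - ε) (R + ε) \ annulus ρ R) :=
        measure_mono (sdiff_subset_sdiff_left (thickening_annulus_subset ε ρ R))
    _ = ENNReal.ofReal (2 * π * (R + ρ) * ε) := by
        rw [measure_sdiff h_subset (isOpen_annulus ρ R).measurableSet.nullMeasurableSet
          (by simp [volume_annulus hρ.le hρR]), volume_annulus (by linarith) (by linarith),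
          volume_annulus hρ.le hρR, ← ENNReal.ofReal_sub _ h_nonneg]
        ring_nf

theorem le_of_mem_tvSet_indicator_annulus (hρ : 0 < ρ) (hρR : ρ < R) {y : ℝ}
    (hy : y ∈ tvSet ((annulus ρ R).indicator 1)) : y ≤ 2 * π * (R + ρ) := by
  have hR : 0 < R := hρ.trans hρR
  refine le_of_mem_tvSet_indicator_of_frequently_volume_le (isOpen_annulus ρ R).measurableSet
    (by positivity) ?_ hy
  refine (eventually_of_mem (Ioo_mem_nhdsGT hρ) fun ε hε => ?_).frequently
  exact volume_thickening_annulus_sdiff_le hε.1 hε.2.le hρR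

theorem finPer_annulus (hρ : 0 < ρ) (hρR : ρ < R) : FinPer (annulus ρ R) :=
  ⟨_, fun _ => le_of_mem_tvSet_indicator_annulus hρ hρR⟩

theorem Per_annulus_le (hρ : 0 < ρ) (hρR : ρ < R) : Per (annulus ρ R) ≤ 2 * π * (R + ρ) :=
  csSup_le ⟨_, 0, contDiff_const, HasCompactSupport.zero, by simp, rfl⟩
    fun _ => le_of_mem_tvSet_indicator_annulus hρ hρR

/-- The calibration of the annulus `annulus ρ R`: the radial vector field of constant divergence
that has norm one on both boundary circles and points out of the annulus there. -/
def annulusCalibration (ρ R : ℝ) (x : E2) : E2 :=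
  ((R - ρ)⁻¹ * (1 - R * ρ * (‖x‖ ^ 2)⁻¹)) • x

theorem contDiffOn_annulusCalibration (ρ R : ℝ) :
    ContDiffOn ℝ (⊤ : ℕ∞) (annulusCalibration ρ R) {0}ᶜ := by
  have h_inv : ContDiffOn ℝ (⊤ : ℕ∞) (fun x : E2 => (‖x‖ ^ 2)⁻¹) {0}ᶜ :=
    (contDiff_norm_sq ℝ).contDiffOn.inv fun x hx => by simpa using hx
  unfold annulusCalibration
  fun_prop

theorem norm_annulusCalibration_le_one (hρ : 0 < ρ) (hρR : ρ < R) {x : E2} (hρx : ρ ≤ ‖x‖)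
    (hxR : ‖x‖ ≤ R) : ‖annulusCalibration ρ R x‖ ≤ 1 := by
  have hx : 0 < ‖x‖ := hρ.trans_le hρx
  have hd : 0 < R - ρ := sub_pos.2 hρR
  have h_norm : ‖annulusCalibration ρ R x‖ = |(‖x‖ ^ 2 - R * ρ) / ((R - ρ) * ‖x‖)| := by
    rw [annulusCalibration, norm_smul, Real.norm_eq_abs, ← abs_norm x, ← abs_mul, abs_norm]
    congr 1
    field_simp
  rw [h_norm, abs_le, le_div_iff₀ (by positivity), div_le_iff₀ (by positivity)]
  constructor
  · nlinarith [mul_nonneg (sub_nonneg.2 hρx) (by linarith : 0 ≤ ‖x‖ + R)]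
  · nlinarith [mul_nonneg (sub_nonneg.2 hxR) (by linarith : 0 ≤ ‖x‖ + ρ)]

theorem div2_annulusCalibration (ρ R : ℝ) {x : E2} (hx : x ≠ 0) :
    div2 (annulusCalibration ρ R) x = 2 / (R - ρ) := by
  have hx_norm : ‖x‖ ^ 2 ≠ 0 := by simpa using hx
  have h_sq : HasFDerivAt (fun y : E2 => ‖y‖ ^ 2) (2 • innerSL ℝ x) x :=
    (hasStrictFDerivAt_norm_sq x).hasFDerivAt
  have h_coeff := ((((hasDerivAt_inv hx_norm).comp_hasFDerivAt x h_sq).const_mul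
    (R * ρ)).const_sub 1).const_mul (R - ρ)⁻¹
  have h_div := div2_smul_self h_coeff.differentiableAt
  rw [h_coeff.fderiv] at h_div
  refine h_div.trans ?_
  simp only [Function.comp_apply, neg_smul, smul_neg, neg_neg, smul_apply, coe_innerSL_apply,
    real_inner_self_eq_norm_sq, nsmul_eq_mul, Nat.cast_ofNat, smul_eq_mul]
  field_simp
  ring

theorem two_div_mul_volR_le_Per (hρ : 0 < ρ) (hρR : ρ < R) {A : Set E2} (hA : MeasurableSet A)
    (hA_fin : FinPer A) (hA_sub : A ⊆ annulus ρ R) : 2 / (R - ρ) * volR A ≤ Per A := by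
  have hK : IsCompact (closedBall (0 : E2) R \ ball 0 ρ) :=
    (isCompact_closedBall 0 R).diff isOpen_ball
  have hAK : A ⊆ closedBall 0 R \ ball 0 ρ :=
    hA_sub.trans (sdiff_subset_sdiff ball_subset_closedBall ball_subset_closedBall)
  have hK_ne : closedBall 0 R \ ball 0 ρ ⊆ ({0}ᶜ : Set E2) := by
    rintro _ hx rfl
    exact hx.2 (mem_ball_self hρ)
  calc 2 / (R - ρ) * volR A = ∫ _ in A, 2 / (R - ρ) := by
        rw [setIntegral_const, smul_eq_mul, mul_comm]
        rfl
    _ = ∫ x in A, div2 (annulusCalibration ρ R) x :=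
        (setIntegral_congr_fun hA fun x hx => div2_annulusCalibration ρ R (hK_ne (hAK hx))).symm
    _ ≤ Per A := setIntegral_div2_le_Per hA hA_fin hK hAK isOpen_compl_singleton hK_ne
        (contDiffOn_annulusCalibration ρ R) fun x hx =>
          norm_annulusCalibration_le_one hρ hρR (by simpa using hx.2) (by simpa using hx.1)

theorem two_pi_mul_div_pi_mul_sq_sub_sq (h_add : R + ρ ≠ 0) (h_sub : R - ρ ≠ 0) :
    (2 * π * R + 2 * π * ρ) / (π * (R ^ 2 - ρ ^ 2)) = 2 / (R - ρ) := by
  rw [sq_sub_sq]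
  field_simp

theorem Per_annulus (hρ : 0 < ρ) (hρR : ρ < R) : Per (annulus ρ R) = 2 * π * (R + ρ) := by
  refine (Per_annulus_le hρ hρR).antisymm ?_
  have h_lower := two_div_mul_volR_le_Per hρ hρR (isOpen_annulus ρ R).measurableSet
    (finPer_annulus hρ hρR) subset_rfl
  have hd : R - ρ ≠ 0 := (sub_pos.2 hρR).ne'
  calc 2 * π * (R + ρ) = 2 / (R - ρ) * volR (annulus ρ R) := by
        rw [volR_annulus hρ.le hρR, sq_sub_sq]
        field_simp
    _ ≤ Per (annulus ρ R) := h_lower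

theorem Per_annulus_div_volR (hρ : 0 < ρ) (hρR : ρ < R) :
    Per (annulus ρ R) / volR (annulus ρ R) = 2 / (R - ρ) := by
  rw [Per_annulus hρ hρR, volR_annulus hρ.le hρR, mul_add]
  exact two_pi_mul_div_pi_mul_sq_sub_sq (by linarith) (by linarith)

end Annulus

/-- an annulus is a Cheeger set of itself. -/
theorem stmt15 (ρ R : ℝ) (hρ : 0 < ρ) (hρR : ρ < R) :
    (∀ Eset : Set E2, MeasurableSet Eset → FinPer Eset →
      Eset ⊆ Metric.ball (0:E2) R \ Metric.closedBall (0:E2) ρ → 0 < volR Eset →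
      Per (Metric.ball (0:E2) R \ Metric.closedBall (0:E2) ρ) /
          volR (Metric.ball (0:E2) R \ Metric.closedBall (0:E2) ρ)
        ≤ Per Eset / volR Eset) ∧
    Per (Metric.ball (0:E2) R \ Metric.closedBall (0:E2) ρ) /
        volR (Metric.ball (0:E2) R \ Metric.closedBall (0:E2) ρ) = 2 / (R - ρ) ∧
    (2 * π * R + 2 * π * ρ) / (π * (R ^ 2 - ρ ^ 2)) = 2 / (R - ρ) := by
  have h_ratio : Per (annulus ρ R) / volR (annulus ρ R) = 2 / (R - ρ) :=
    Per_annulus_div_volR hρ hρR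
  refine ⟨fun A hA hA_fin hA_sub hA_pos => ?_, h_ratio, ?_⟩
  · exact h_ratio.trans_le <|
      (le_div_iff₀ hA_pos).2 (two_div_mul_volR_le_Per hρ hρR hA hA_fin hA_sub)
  · exact two_pi_mul_div_pi_mul_sq_sub_sq (by linarith) (by linarith)

end
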